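/- The function r(x) = max_{s∈S} q_s(x) is strictly convex on ℝ and attains its minimum at a unique point x*; moreover the minimum value r(x*) equals the maximum of q*_ξ over all measures ξ. -/

import Mathlib

open Matrix

namespace TwoDim

/-- The set of plots of an `a × b` block. -/
abbrev Plot (a b : ℕ) := Fin a × Fin b

/-- A block array: an assignment of one of `t` treatments to each plot. -/
abbrev BlockArray (a b t : ℕ) := Plot a b → Fin t

/-- The all-ones matrix. -/
def Jmat (n : Type*) : Matrix n n ℝ := Matrix.of fun _ _ => 1

/-- `B_m = I - J/m`. -/
noncomputable def Bmat (n : Type*) [Fintype n] [DecidableEq n] : Matrix n n ℝ :=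
  1 - ((Fintype.card n : ℝ))⁻¹ • Jmat n

variable {a b t : ℕ}

/-- The treatment incidence matrix `T_s`. -/
def Tmat (s : BlockArray a b t) : Matrix (Plot a b) (Fin t) ℝ :=
  Matrix.of fun q k => if s q = k then 1 else 0

/-- Two plots are neighbors if they agree in one coordinate and differ by 1 in the other. -/
def Neighbor (q r : Plot a b) : Prop :=
  (q.1 = r.1 ∧ (q.2.val + 1 = r.2.val ∨ r.2.val + 1 = q.2.val)) ∨
  (q.2 = r.2 ∧ (q.1.val + 1 = r.1.val ∨ r.1.val + 1 = q.1.val))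

instance (q r : Plot a b) : Decidable (Neighbor q r) := by
  unfold Neighbor; infer_instance

/-- The adjacency matrix of the neighbor relation. -/
def Mmat (a b : ℕ) : Matrix (Plot a b) (Plot a b) ℝ :=
  Matrix.of fun q r => if Neighbor q r then 1 else 0

/-- `F_s = M T_s`. -/
def Fmat (s : BlockArray a b t) : Matrix (Plot a b) (Fin t) ℝ :=
  Mmat a b * Tmat s

/-- `B̃ = Σ⁻¹ − Σ⁻¹ J Σ⁻¹ / (1'Σ⁻¹1)`. -/
noncomputable def Btilde (Sig : Matrix (Plot a b) (Plot a b) ℝ) :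
    Matrix (Plot a b) (Plot a b) ℝ :=
  Sig⁻¹ - (∑ i, ∑ j, Sig⁻¹ i j)⁻¹ • (Sig⁻¹ * Jmat (Plot a b) * Sig⁻¹)

/-- `C_{s00} = T_s' W T_s` (with `W` playing the role of `B̃`). -/
def Cs00 (W : Matrix (Plot a b) (Plot a b) ℝ) (s : BlockArray a b t) :
    Matrix (Fin t) (Fin t) ℝ := (Tmat s)ᵀ * W * Tmat s

/-- `C_{s01} = T_s' W F_s`. -/
def Cs01 (W : Matrix (Plot a b) (Plot a b) ℝ) (s : BlockArray a b t) :
    Matrix (Fin t) (Fin t) ℝ := (Tmat s)ᵀ * W * Fmat s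

/-- `C_{s11} = F_s' W F_s`. -/
def Cs11 (W : Matrix (Plot a b) (Plot a b) ℝ) (s : BlockArray a b t) :
    Matrix (Fin t) (Fin t) ℝ := (Fmat s)ᵀ * W * Fmat s

/-- `c_{s00} = tr(B_t C_{s00})`. -/
noncomputable def cs00 (W : Matrix (Plot a b) (Plot a b) ℝ) (s : BlockArray a b t) : ℝ :=
  Matrix.trace (Bmat (Fin t) * Cs00 W s)

noncomputable def cs01 (W : Matrix (Plot a b) (Plot a b) ℝ) (s : BlockArray a b t) : ℝ :=
  Matrix.trace (Bmat (Fin t) * Cs01 W s)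

noncomputable def cs11 (W : Matrix (Plot a b) (Plot a b) ℝ) (s : BlockArray a b t) : ℝ :=
  Matrix.trace (Bmat (Fin t) * Cs11 W s)

/-- The quadratic `q_s(x) = c_{s00} + 2 c_{s01} x + c_{s11} x²`. -/
noncomputable def qpoly (W : Matrix (Plot a b) (Plot a b) ℝ) (s : BlockArray a b t) (x : ℝ) : ℝ :=
  cs00 W s + 2 * cs01 W s * x + cs11 W s * x ^ 2

/-- A measure on the set of block arrays: nonnegative weights summing to one. -/
def IsMeasure (ξ : BlockArray a b t → ℝ) : Prop :=
  (∀ s, 0 ≤ ξ s) ∧ ∑ s, ξ s = 1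

noncomputable def Cm00 (W : Matrix (Plot a b) (Plot a b) ℝ) (ξ : BlockArray a b t → ℝ) :
    Matrix (Fin t) (Fin t) ℝ := ∑ s, ξ s • Cs00 W s

noncomputable def Cm01 (W : Matrix (Plot a b) (Plot a b) ℝ) (ξ : BlockArray a b t → ℝ) :
    Matrix (Fin t) (Fin t) ℝ := ∑ s, ξ s • Cs01 W s

noncomputable def Cm11 (W : Matrix (Plot a b) (Plot a b) ℝ) (ξ : BlockArray a b t → ℝ) :
    Matrix (Fin t) (Fin t) ℝ := ∑ s, ξ s • Cs11 W s

noncomputable def cm00 (W : Matrix (Plot a b) (Plot a b) ℝ) (ξ : BlockArray a b t → ℝ) : ℝ :=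
  ∑ s, ξ s * cs00 W s

noncomputable def cm01 (W : Matrix (Plot a b) (Plot a b) ℝ) (ξ : BlockArray a b t → ℝ) : ℝ :=
  ∑ s, ξ s * cs01 W s

noncomputable def cm11 (W : Matrix (Plot a b) (Plot a b) ℝ) (ξ : BlockArray a b t → ℝ) : ℝ :=
  ∑ s, ξ s * cs11 W s

/-- `q*_ξ = c_{ξ00} − c_{ξ01}²/c_{ξ11}`. -/
noncomputable def qstar (W : Matrix (Plot a b) (Plot a b) ℝ) (ξ : BlockArray a b t → ℝ) : ℝ :=
  cm00 W ξ - (cm01 W ξ) ^ 2 / cm11 W ξ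

/-- `G` is a generalized inverse of `A`. -/
def IsGenInv (A G : Matrix (Fin t) (Fin t) ℝ) : Prop := A * G * A = A

/-- Information matrix `C_{ξ00} − C_{ξ01} G C_{ξ10}` computed with a generalized inverse `G`. -/
noncomputable def InfoMat (W : Matrix (Plot a b) (Plot a b) ℝ) (ξ : BlockArray a b t → ℝ)
    (G : Matrix (Fin t) (Fin t) ℝ) : Matrix (Fin t) (Fin t) ℝ :=
  Cm00 W ξ - Cm01 W ξ * G * (Cm01 W ξ)ᵀ

/-- A criterion `Φ` on `t×t` real symmetric matrices: concave, Loewner-nondecreasing, and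
invariant under simultaneous permutations of rows and columns. -/
def GoodPhi (t : ℕ) (Φ : Matrix (Fin t) (Fin t) ℝ → ℝ) : Prop :=
  (∀ A B : Matrix (Fin t) (Fin t) ℝ, A.IsSymm → B.IsSymm → ∀ α : ℝ, 0 ≤ α → α ≤ 1 →
      α * Φ A + (1 - α) * Φ B ≤ Φ (α • A + (1 - α) • B)) ∧
  (∀ A B : Matrix (Fin t) (Fin t) ℝ, A.IsSymm → B.IsSymm → (B - A).PosSemidef → Φ A ≤ Φ B) ∧
  (∀ (σ : Equiv.Perm (Fin t)) (C : Matrix (Fin t) (Fin t) ℝ), Φ (C.submatrix σ σ) = Φ C)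

/-- Universal optimality of a measure `ξ`. -/
def UnivOptimal (W : Matrix (Plot a b) (Plot a b) ℝ) (ξ : BlockArray a b t → ℝ) : Prop :=
  ∀ η : BlockArray a b t → ℝ, IsMeasure η →
    ∀ G H : Matrix (Fin t) (Fin t) ℝ, IsGenInv (Cm11 W ξ) G → IsGenInv (Cm11 W η) H →
      ∀ Φ : Matrix (Fin t) (Fin t) ℝ → ℝ, GoodPhi t Φ →
        Φ (InfoMat W η H) ≤ Φ (InfoMat W ξ G)

/-- A measure is symmetric if it is invariant under relabeling of the treatments. -/
def IsSymmetricMeasure (ξ : BlockArray a b t → ℝ) : Prop :=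
  ∀ (σ : Equiv.Perm (Fin t)) (s : BlockArray a b t), ξ (fun q => σ (s q)) = ξ s

/-- A matrix is completely symmetric if it is of the form `αI + βJ`. -/
def ComplSym (A : Matrix (Fin t) (Fin t) ℝ) : Prop :=
  ∃ α β : ℝ, A = α • (1 : Matrix (Fin t) (Fin t) ℝ) + β • Jmat (Fin t)

/-- A measure is pseudo symmetric if `C_{ξ00}`, `C_{ξ01}`, `C_{ξ11}` are completely symmetric. -/
def PseudoSym (W : Matrix (Plot a b) (Plot a b) ℝ) (ξ : BlockArray a b t → ℝ) : Prop :=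
  ComplSym (Cm00 W ξ) ∧ ComplSym (Cm01 W ξ) ∧ ComplSym (Cm11 W ξ)

/-- `r(x) = max_{s∈S} q_s(x)`. -/
noncomputable def rfun {a b : ℕ} (t : ℕ) (W : Matrix (Plot a b) (Plot a b) ℝ) (x : ℝ) : ℝ :=
  sSup (Set.range fun s : BlockArray a b t => qpoly W s x)

/-- `min_{s∈S} q_s(x)`. -/
noncomputable def rmin {a b : ℕ} (t : ℕ) (W : Matrix (Plot a b) (Plot a b) ℝ) (x : ℝ) : ℝ :=
  sInf (Set.range fun s : BlockArray a b t => qpoly W s x)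

/-- Number of plots assigned treatment `k` by `s`. -/
noncomputable def f0 (s : BlockArray a b t) (k : Fin t) : ℕ :=
  {q : Plot a b | s q = k}.ncard

/-- Replications of `k` among the columns `1,…,b−1`. -/
noncomputable def f1 (s : BlockArray a b t) (k : Fin t) : ℕ :=
  {q : Plot a b | s q = k ∧ q.2.val + 1 < b}.ncard

/-- Replications of `k` among the columns `2,…,b`. -/
noncomputable def f2 (s : BlockArray a b t) (k : Fin t) : ℕ :=
  {q : Plot a b | s q = k ∧ 1 ≤ q.2.val}.ncard

/-- Replications of `k` among the rows `1,…,a−1`. -/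
noncomputable def f3 (s : BlockArray a b t) (k : Fin t) : ℕ :=
  {q : Plot a b | s q = k ∧ q.1.val + 1 < a}.ncard

/-- Replications of `k` among the rows `2,…,a`. -/
noncomputable def f4 (s : BlockArray a b t) (k : Fin t) : ℕ :=
  {q : Plot a b | s q = k ∧ 1 ≤ q.1.val}.ncard

noncomputable def fc (s : BlockArray a b t) : ℕ → Fin t → ℕ
  | 0 => f0 s
  | 1 => f1 s
  | 2 => f2 s
  | 3 => f3 s
  | 4 => f4 s
  | _ => fun _ => 0

/-- `h^{uv}_s = Σ_k f^u_{s,k} f^v_{s,k}`. -/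
noncomputable def hval (s : BlockArray a b t) (u v : ℕ) : ℝ :=
  ∑ k : Fin t, (fc s u k : ℝ) * (fc s v k : ℝ)

noncomputable def h00 (s : BlockArray a b t) : ℝ := hval s 0 0

noncomputable def h1 (s : BlockArray a b t) : ℝ :=
  hval s 0 1 + hval s 0 2 + hval s 0 3 + hval s 0 4

noncomputable def h2 (s : BlockArray a b t) : ℝ :=
  hval s 1 1 + hval s 2 2 + hval s 3 3 + hval s 4 4

noncomputable def h3 (s : BlockArray a b t) : ℝ :=
  hval s 1 2 + hval s 1 3 + hval s 1 4 + hval s 2 3 + hval s 2 4 + hval s 3 4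

/-- `z¹_{s,r}`: horizontally adjacent pairs of plots receiving the same treatment. -/
noncomputable def zr1 (s : BlockArray a b t) : ℕ :=
  {qr : Plot a b × Plot a b |
    qr.1.1 = qr.2.1 ∧ qr.1.2.val + 1 = qr.2.2.val ∧ s qr.1 = s qr.2}.ncard

noncomputable def zr2 (s : BlockArray a b t) : ℕ :=
  {qr : Plot a b × Plot a b |
    qr.1.1 = qr.2.1 ∧ qr.1.2.val + 2 = qr.2.2.val ∧ s qr.1 = s qr.2}.ncard

noncomputable def zc1 (s : BlockArray a b t) : ℕ :=
  {qr : Plot a b × Plot a b |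
    qr.1.2 = qr.2.2 ∧ qr.1.1.val + 1 = qr.2.1.val ∧ s qr.1 = s qr.2}.ncard

noncomputable def zc2 (s : BlockArray a b t) : ℕ :=
  {qr : Plot a b × Plot a b |
    qr.1.2 = qr.2.2 ∧ qr.1.1.val + 2 = qr.2.1.val ∧ s qr.1 = s qr.2}.ncard

/-- pairs `(i,j)`, `(i−1,j+1)` with the same treatment. -/
noncomputable def zd1 (s : BlockArray a b t) : ℕ :=
  {qr : Plot a b × Plot a b |
    qr.2.1.val + 1 = qr.1.1.val ∧ qr.1.2.val + 1 = qr.2.2.val ∧ s qr.1 = s qr.2}.ncard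

/-- pairs `(i,j)`, `(i+1,j+1)` with the same treatment. -/
noncomputable def zd2 (s : BlockArray a b t) : ℕ :=
  {qr : Plot a b × Plot a b |
    qr.1.1.val + 1 = qr.2.1.val ∧ qr.1.2.val + 1 = qr.2.2.val ∧ s qr.1 = s qr.2}.ncard

noncomputable def z1 (s : BlockArray a b t) : ℝ := 2 * zr1 s + 2 * zc1 s

noncomputable def z2 (s : BlockArray a b t) : ℝ :=
  2 * zr2 s + 2 * zc2 s + 4 * zd1 s + 4 * zd2 s

/-- `η = 4p − 2a − 2b − 2(8ab − 7a − 7b + 4)/t + 4(2p − a − b)²/(pt)` where `p = ab`. -/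
noncomputable def eta (a b t : ℕ) : ℝ :=
  4 * ((a : ℝ) * b) - 2 * a - 2 * b - 2 * (8 * (a : ℝ) * b - 7 * a - 7 * b + 4) / t +
    4 * (2 * (a : ℝ) * b - a - b) ^ 2 / (((a : ℝ) * b) * t)

/-- A corner plot of the `a × b` block. -/
def IsCorner (q : Plot a b) : Prop :=
  (q.1.val = 0 ∨ q.1.val + 1 = a) ∧ (q.2.val = 0 ∨ q.2.val + 1 = b)

/-- Treatment `k` is significant in `s`: it occupies exactly two plots, which are
neighbors, at least one of them being a corner plot. -/
def Significant (s : BlockArray a b t) (k : Fin t) : Prop :=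
  ∃ u v : Plot a b, u ≠ v ∧ {q : Plot a b | s q = k} = {u, v} ∧
    Neighbor u v ∧ (IsCorner u ∨ IsCorner v)

/-- Treatment `k` is strictly significant in `s`: both of its two plots are corners. -/
def StrictSignificant (s : BlockArray a b t) (k : Fin t) : Prop :=
  ∃ u v : Plot a b, u ≠ v ∧ {q : Plot a b | s q = k} = {u, v} ∧
    Neighbor u v ∧ IsCorner u ∧ IsCorner v

/-- `Q_i`: block arrays with exactly `i` significant treatments in which every other
treatment appears at most once. -/
def Qset (a b t : ℕ) (i : ℕ) : Set (BlockArray a b t) :=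
  {s | {k : Fin t | Significant s k}.ncard = i ∧
       ∀ k : Fin t, ¬ Significant s k → f0 s k ≤ 1}

/-- `Q_j*`: members of `Q_j` whose significant treatments are all strictly significant. -/
def QsetStar (a b t : ℕ) (j : ℕ) : Set (BlockArray a b t) :=
  {s | s ∈ Qset a b t j ∧ ∀ k : Fin t, Significant s k → StrictSignificant s k}

/-- Treatment `k` is connected in `s`. -/
def ConnectedIn (s : BlockArray a b t) (k : Fin t) : Prop :=
  ∀ q r : Plot a b, s q = k → s r = k →
    Relation.ReflTransGen (fun u v => Neighbor u v ∧ s u = k ∧ s v = k) q r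

/-- Generic minimax statement for finitely many strictly convex quadratics. -/
theorem quad_minimax {ι : Type*} [Fintype ι] [Nonempty ι] (A B C : ι → ℝ) (hC : ∀ i, 0 < C i)
    (r : ℝ → ℝ) (hle : ∀ i x, A i + 2 * B i * x + C i * x ^ 2 ≤ r x)
    (hatt : ∀ x, ∃ i, r x = A i + 2 * B i * x + C i * x ^ 2) :
    StrictConvexOn ℝ Set.univ r ∧
    ∃ xs : ℝ, (∀ y, r xs ≤ r y) ∧ (∀ x', (∀ y, r x' ≤ r y) → x' = xs) ∧
      IsGreatest {y : ℝ | ∃ η : ι → ℝ, ((∀ s, 0 ≤ η s) ∧ ∑ s, η s = 1) ∧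
        (∑ s, η s * A s) - (∑ s, η s * B s) ^ 2 / (∑ s, η s * C s) = y} (r xs) := by
  classical
  have hconv : StrictConvexOn ℝ Set.univ r := by
    refine ⟨convex_univ, ?_⟩
    intro x _ y _ hxy α β hα hβ hαβ
    obtain ⟨i, hi⟩ := hatt (α • x + β • y)
    rw [hi]
    have h1 := mul_le_mul_of_nonneg_left (hle i x) hα.le
    have h2 := mul_le_mul_of_nonneg_left (hle i y) hβ.le
    have h3 : 0 < C i * (α * β * (x - y) ^ 2) := by
      have : 0 < (x - y) ^ 2 := by
        have := sub_ne_zero.mpr hxy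
        positivity
      have := hC i
      positivity
    have hb : β = 1 - α := by linarith
    subst hb
    simp only [smul_eq_mul]
    nlinarith
  have hcont : Continuous r := by
    have := hconv.convexOn.continuousOn isOpen_univ
    exact continuousOn_univ.mp this
  have hcoer : Filter.Tendsto r (Filter.cocompact ℝ) Filter.atTop := by
    obtain ⟨i⟩ := ‹Nonempty ι›
    refine Filter.tendsto_atTop_mono (fun x => hle i x) ?_
    have h1 : Filter.Tendsto (fun x : ℝ => ‖x + B i / C i‖) (Filter.cocompact ℝ) Filter.atTop :=
      tendsto_norm_cocompact_atTop.comp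
        (Homeomorph.addRight (B i / C i)).isClosedEmbedding.tendsto_cocompact
    have h2 := (Filter.tendsto_pow_atTop (two_ne_zero)).comp h1
    have h3 := Filter.tendsto_atTop_add_const_left _ (A i - (B i)^2 / C i) (h2.const_mul_atTop (hC i))
    refine h3.congr fun x => ?_
    have := (hC i).ne'
    simp only [Function.comp, Real.norm_eq_abs, sq_abs]
    field_simp
    ring
  obtain ⟨xs, hxs⟩ := hcont.exists_forall_le hcoer
  have key : ∀ e : ℝ, e ≠ 0 → ∃ i, r xs = A i + 2 * B i * xs + C i * xs ^ 2 ∧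
      0 ≤ e * (B i + C i * xs) := by
    intro e he
    by_contra! hcon
    have hev : ∀ i, ∀ᶠ h in nhdsWithin (0:ℝ) (Set.Ioi 0),
        A i + 2 * B i * (xs + h * e) + C i * (xs + h * e) ^ 2 < r xs := by
      intro i
      rcases (hle i xs).lt_or_eq with h | h
      · have hc : ContinuousAt (fun h : ℝ =>
          A i + 2 * B i * (xs + h * e) + C i * (xs + h * e) ^ 2) 0 := by fun_prop
        exact (hc.eventually_lt_const (by simpa using h)).filter_mono nhdsWithin_le_nhds
      · have hd := hcon i h.symm
        have hc : ContinuousAt (fun h : ℝ =>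
          2 * (e * (B i + C i * xs)) + C i * h * e ^ 2) 0 := by fun_prop
        have := (hc.eventually_lt_const (u := 0) (by simp only [mul_zero, zero_mul, add_zero]; linarith)).filter_mono
          (nhdsWithin_le_nhds (s := Set.Ioi 0))
        filter_upwards [this, self_mem_nhdsWithin] with x hx hx0
        have := mul_neg_of_pos_of_neg (Set.mem_Ioi.mp hx0) hx
        rw [← h]
        nlinarith
    obtain ⟨h, hh⟩ := (Filter.eventually_all.mpr hev).exists
    obtain ⟨i, hi⟩ := hatt (xs + h * e)
    have := hxs (xs + h * e)
    have := hh i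
    linarith
  have hle' : ∀ η : ι → ℝ, (∀ s, 0 ≤ η s) → ∑ s, η s = 1 → ∀ x,
      (∑ s, η s * A s) + 2 * (∑ s, η s * B s) * x + (∑ s, η s * C s) * x ^ 2 ≤ r x := by
    intro η h0 h1 x
    calc _ = ∑ s, η s * (A s + 2 * B s * x + C s * x ^ 2) := by
          simp only [Finset.sum_mul, Finset.mul_sum, ← Finset.sum_add_distrib]
          exact Finset.sum_congr rfl fun s _ => by ring
      _ ≤ ∑ s, η s * r x := Finset.sum_le_sum fun s _ => mul_le_mul_of_nonneg_left (hle s x) (h0 s)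
      _ = r x := by rw [← Finset.sum_mul, h1, one_mul]
  have hCpos : ∀ η : ι → ℝ, (∀ s, 0 ≤ η s) → ∑ s, η s = 1 → 0 < ∑ s, η s * C s := by
    intro η h0 h1
    have hnn : ∀ s ∈ Finset.univ, 0 ≤ η s * C s := fun s _ => mul_nonneg (h0 s) (hC s).le
    refine (Finset.sum_nonneg hnn).lt_of_ne fun h => ?_
    have := (Finset.sum_eq_zero_iff_of_nonneg hnn).mp h.symm
    have : ∑ s, η s = 0 := Finset.sum_eq_zero fun s hs =>
      (mul_eq_zero.mp (this s hs)).resolve_right (hC s).ne'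
    linarith
  refine ⟨hconv, xs, hxs, ?_, ?_, ?_⟩
  · intro x' hx'
    exact hconv.eq_of_isMinOn (fun y _ => hx' y) (fun y _ => hxs y) (Set.mem_univ _) (Set.mem_univ _)
  · obtain ⟨i, hi, hi'⟩ := key 1 one_ne_zero
    obtain ⟨j, hj, hj'⟩ := key (-1) (by norm_num)
    set u := B i + C i * xs with hu
    set v := B j + C j * xs with hv
    have hu0 : 0 ≤ u := by linarith
    have hv0 : v ≤ 0 := by linarith
    obtain ⟨w, hw0, hw1, hw⟩ : ∃ w : ℝ, 0 ≤ w ∧ w ≤ 1 ∧ w * u + (1 - w) * v = 0 := by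
      rcases hu0.eq_or_lt with h | h
      · exact ⟨1, by norm_num, le_rfl, by rw [← h]; ring⟩
      · have hpos : 0 < u - v := by linarith
        refine ⟨-v / (u - v), div_nonneg (by linarith) hpos.le, ?_, ?_⟩
        · rw [div_le_one hpos]; linarith
        · field_simp; ring
    have hsum : ∀ f : ι → ℝ, ∑ s, (Pi.single i w + Pi.single j (1 - w) : ι → ℝ) s * f s
        = w * f i + (1 - w) * f j := by
      intro f
      simp [add_mul, Finset.sum_add_distrib, Pi.single_apply]
    have hm0 : ∀ s, 0 ≤ (Pi.single i w + Pi.single j (1 - w) : ι → ℝ) s := by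
      intro s
      have : 0 ≤ 1 - w := by linarith
      simp only [Pi.add_apply, Pi.single_apply]
      split_ifs <;> linarith
    have hm1 : ∑ s, (Pi.single i w + Pi.single j (1 - w) : ι → ℝ) s = 1 := by
      have := hsum (fun _ => 1)
      simp only [mul_one] at this
      rw [this]; ring
    have hp := hCpos _ hm0 hm1
    refine ⟨_, ⟨hm0, hm1⟩, ?_⟩
    rw [hsum] at hp
    rw [hsum, hsum, hsum]
    have hB : w * B i + (1 - w) * B j = -(w * C i + (1 - w) * C j) * xs := by
      rw [hu, hv] at hw; linarith
    have hr : r xs = w * (A i + 2 * B i * xs + C i * xs ^ 2)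
        + (1 - w) * (A j + 2 * B j * xs + C j * xs ^ 2) := by
      rw [← hi, ← hj]; ring
    have hq : (w * B i + (1 - w) * B j) ^ 2 / (w * C i + (1 - w) * C j)
        = (w * C i + (1 - w) * C j) * xs ^ 2 := by
      rw [hB]; field_simp
    rw [hq, hr]
    linear_combination (-2 * xs) * hB
  · rintro y ⟨η, ⟨h0, h1⟩, rfl⟩
    have hp := hCpos η h0 h1
    refine le_trans ?_ (hle' η h0 h1 xs)
    have hp' := hp.ne'
    generalize (∑ s, η s * A s) = X at *
    generalize (∑ s, η s * B s) = Y at *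
    generalize (∑ s, η s * C s) = Z at *
    have h5 : 0 ≤ (Y + Z * xs) ^ 2 / Z := div_nonneg (sq_nonneg _) hp.le
    have h6 : (Y + Z * xs) ^ 2 / Z = Y ^ 2 / Z + 2 * Y * xs + Z * xs ^ 2 := by
      field_simp
      ring
    linarith

theorem Btilde_form_pos (Sig : Matrix (Plot a b) (Plot a b) ℝ) (hSig : Sig.PosDef)
    (v : Plot a b → ℝ) (q₁ q₂ : Plot a b) (hv : v q₁ ≠ v q₂) :
    0 < v ⬝ᵥ (Btilde Sig *ᵥ v) := by
  have hP : (Sig⁻¹).PosDef := hSig.inv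
  have hsymm : (Sig⁻¹)ᵀ = Sig⁻¹ := by simpa using hP.isHermitian.eq
  unfold Btilde
  set P := Sig⁻¹ with hPdef
  set e : Plot a b → ℝ := fun _ => 1 with he
  have hS : (∑ i, ∑ j, P i j) = e ⬝ᵥ (P *ᵥ e) := by
    simp [dotProduct, mulVec, he]
  have he0 : e ≠ 0 := fun h => by simpa [he] using congrFun h q₁
  have hSpos : 0 < e ⬝ᵥ (P *ᵥ e) := by simpa using hP.dotProduct_mulVec_pos he0
  have hJ : ∀ w : Plot a b → ℝ, Jmat (Plot a b) *ᵥ w = (e ⬝ᵥ w) • e := by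
    intro w; ext i; simp [Jmat, mulVec, dotProduct, he]
  have hcomm : ∀ x y : Plot a b → ℝ, x ⬝ᵥ (P *ᵥ y) = y ⬝ᵥ (P *ᵥ x) := by
    intro x y
    rw [dotProduct_mulVec, ← mulVec_transpose, hsymm, dotProduct_comm]
  rw [hS]
  set S := e ⬝ᵥ (P *ᵥ e) with hSdef
  set m := e ⬝ᵥ (P *ᵥ v) with hm
  have hw : v - (m / S) • e ≠ 0 := by
    intro h
    apply hv
    have h1 := congrFun h q₁
    have h2 := congrFun h q₂
    simp [he] at h1 h2
    linarith
  have hpos : 0 < (v - (m / S) • e) ⬝ᵥ (P *ᵥ (v - (m / S) • e)) := by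
    simpa using hP.dotProduct_mulVec_pos hw
  convert hpos using 1
  simp only [sub_mulVec, smul_mulVec, ← mulVec_mulVec, hJ, mulVec_sub, mulVec_smul, dotProduct_sub,
    sub_dotProduct, dotProduct_smul, smul_dotProduct, smul_eq_mul]
  rw [hcomm v e, ← hm, ← hSdef]
  field_simp
  ring

theorem Bmat_sq (ht : 2 ≤ t) : Bmat (Fin t) * Bmat (Fin t) = Bmat (Fin t) := by
  have hJ : Jmat (Fin t) * Jmat (Fin t) = (t : ℝ) • Jmat (Fin t) := by
    ext i j; simp [Jmat, Matrix.mul_apply]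
  have : (t : ℝ) ≠ 0 := by positivity
  simp only [Bmat, Fintype.card_fin, sub_mul, mul_sub, one_mul, mul_one, smul_mul_assoc,
    mul_smul_comm, hJ, smul_smul]
  rw [inv_mul_cancel₀ this]
  simp

theorem Bmat_transpose : (Bmat (Fin t))ᵀ = Bmat (Fin t) := by
  ext i j; simp [Bmat, Jmat, Matrix.one_apply, eq_comm]

theorem cs11_eq (ht : 2 ≤ t) (W : Matrix (Plot a b) (Plot a b) ℝ) (s : BlockArray a b t) :
    cs11 W s = ∑ k, (fun q => (Fmat s * Bmat (Fin t)) q k) ⬝ᵥ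
      (W *ᵥ (fun q => (Fmat s * Bmat (Fin t)) q k)) := by
  have h1 : cs11 W s = Matrix.trace ((Fmat s * Bmat (Fin t))ᵀ * (W * (Fmat s * Bmat (Fin t)))) := by
    unfold cs11 Cs11
    conv_lhs => rw [← Bmat_sq ht]
    rw [transpose_mul, Bmat_transpose, Matrix.mul_assoc, Matrix.trace_mul_comm]
    simp only [Matrix.mul_assoc]
  rw [h1, Matrix.trace]
  refine Finset.sum_congr rfl fun k _ => ?_
  simp only [diag_apply, Matrix.mul_apply' , dotProduct, mulVec, transpose_apply]

theorem Fmat_apply (s : BlockArray a b t) (q : Plot a b) (k : Fin t) :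
    Fmat s q k = (((Finset.univ.filter fun r => Neighbor q r ∧ s r = k).card : ℤ) : ℝ) := by
  simp [Fmat, Mmat, Tmat, Matrix.mul_apply, Finset.card_filter, ite_and]
  refine Finset.sum_congr rfl fun x _ => ?_
  split_ifs <;> rfl

theorem Fmat_Bmat (s : BlockArray a b t) (q : Plot a b) (k : Fin t) :
    (Fmat s * Bmat (Fin t)) q k = Fmat s q k -
      (t : ℝ)⁻¹ * ((Finset.univ.filter fun r => Neighbor q r).card : ℝ) := by
  have hrow : ∑ l, Fmat s q l = ((Finset.univ.filter fun r => Neighbor q r).card : ℝ) := by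
    simp only [Fmat, Matrix.mul_apply]
    rw [Finset.sum_comm]
    simp [Mmat, Tmat]
  rw [← hrow, Bmat, Matrix.mul_sub, Matrix.mul_one, Matrix.sub_apply]
  simp [Jmat, Matrix.mul_apply, Finset.mul_sum, mul_comm]

theorem cs11_pos (ha : 2 ≤ a) (hb : 3 ≤ b) (ht : 2 ≤ t)
    (Sig : Matrix (Plot a b) (Plot a b) ℝ) (hSig : Sig.PosDef) (s : BlockArray a b t) :
    0 < cs11 (Btilde Sig) s := by
  rw [cs11_eq ht]
  have hd0 : (Finset.univ.filter fun r : Plot a b =>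
      Neighbor ((⟨0, by omega⟩, ⟨0, by omega⟩) : Plot a b) r).card = 2 := by
    rw [show (Finset.univ.filter fun r : Plot a b =>
      Neighbor ((⟨0, by omega⟩, ⟨0, by omega⟩) : Plot a b) r) =
      {((⟨0, by omega⟩, ⟨1, by omega⟩) : Plot a b), (⟨1, by omega⟩, ⟨0, by omega⟩)} from ?_]
    · rw [Finset.card_pair]; simp
    · ext ⟨⟨i, hi⟩, ⟨j, hj⟩⟩
      simp [Neighbor]
      omega
  have hd1 : (Finset.univ.filter fun r : Plot a b =>
      Neighbor ((⟨0, by omega⟩, ⟨1, by omega⟩) : Plot a b) r).card = 3 := by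
    rw [show (Finset.univ.filter fun r : Plot a b =>
      Neighbor ((⟨0, by omega⟩, ⟨1, by omega⟩) : Plot a b) r) =
      {((⟨0, by omega⟩, ⟨0, by omega⟩) : Plot a b), (⟨0, by omega⟩, ⟨2, by omega⟩),
        (⟨1, by omega⟩, ⟨1, by omega⟩)} from ?_]
    · rw [Finset.card_eq_three]
      exact ⟨_, _, _, by simp, by simp, by simp, rfl⟩
    · ext ⟨⟨i, hi⟩, ⟨j, hj⟩⟩
      simp [Neighbor]
      omega
  haveI : Nonempty (Fin t) := ⟨⟨0, by omega⟩⟩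
  refine Finset.sum_pos (fun k _ => ?_) Finset.univ_nonempty
  refine Btilde_form_pos Sig hSig _ (⟨0, by omega⟩, ⟨0, by omega⟩) (⟨0, by omega⟩, ⟨1, by omega⟩) ?_
  intro h
  simp only [Fmat_Bmat, hd0, hd1, Fmat_apply] at h
  have ht0 : (t : ℝ) ≠ 0 := by positivity
  generalize ((Finset.univ.filter fun r : Plot a b =>
      Neighbor ((⟨0, by omega⟩, ⟨0, by omega⟩) : Plot a b) r ∧ s r = k).card : ℤ) = x at h
  generalize ((Finset.univ.filter fun r : Plot a b =>
      Neighbor ((⟨0, by omega⟩, ⟨1, by omega⟩) : Plot a b) r ∧ s r = k).card : ℤ) = y at h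
  have h2 : (t : ℝ) * ((y : ℝ) - x) = 1 := by
    field_simp at h
    push_cast at h
    linarith
  have h3 : (t : ℤ) * (y - x) = 1 := by exact_mod_cast h2
  have h4 := Int.eq_one_or_neg_one_of_mul_eq_one h3
  omega

/-- `r(x) = max_{s∈S} q_s(x)` is strictly convex, attains its minimum at a
unique point `x*`, and `r(x*)` equals the maximum of `q*_ξ` over all measures. -/
theorem rfun_strictConvex_unique_min
    (a b t : ℕ) (ha : 2 ≤ a) (hab : a ≤ b) (hb : 3 ≤ b) (ht : 2 ≤ t)
    (Sig : Matrix (Plot a b) (Plot a b) ℝ) (hSig : Sig.PosDef) :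
    StrictConvexOn ℝ Set.univ (rfun t (Btilde Sig)) ∧
    ∃ xstar : ℝ,
      (∀ y : ℝ, rfun t (Btilde Sig) xstar ≤ rfun t (Btilde Sig) y) ∧
      (∀ x' : ℝ, (∀ y : ℝ, rfun t (Btilde Sig) x' ≤ rfun t (Btilde Sig) y) → x' = xstar) ∧
      IsGreatest {y : ℝ | ∃ η : BlockArray a b t → ℝ,
          IsMeasure η ∧ qstar (Btilde Sig) η = y} (rfun t (Btilde Sig) xstar) := by
  haveI : Nonempty (BlockArray a b t) := ⟨fun _ => ⟨0, by omega⟩⟩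
  have hbdd : ∀ x, (Set.range fun s : BlockArray a b t => qpoly (Btilde Sig) s x).Finite :=
    fun x => Set.finite_range _
  exact quad_minimax (fun s => cs00 (Btilde Sig) s) (fun s => cs01 (Btilde Sig) s)
    (fun s => cs11 (Btilde Sig) s) (fun s => cs11_pos ha hb ht Sig hSig s) (rfun t (Btilde Sig))
    (fun s x => le_csSup (hbdd x).bddAbove ⟨s, rfl⟩)
    (fun x => by
      obtain ⟨s, hs⟩ := (Set.range_nonempty
        fun s : BlockArray a b t => qpoly (Btilde Sig) s x).csSup_mem (hbdd x)
      exact ⟨s, hs.symm⟩)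

end TwoDim
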